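/- arXiv:2203.08505 — 3 statements merged into one kernel-verified Lean document; each statement's English description precedes it below -/
import Mathlib

section
/- Let N = Σ_{i=1}^{n} 1_i be a counting variable built from indicator random variables 1_1,…,1_n on a common probability space, and suppose E[1_i 1_j] ≤ ε for all i ≠ j in {1,…,n}. Then 2 P(N ≥ 2) ≤ E(N) − P(N = 1) ≤ 2 (E(N) − P(N ≥ 1)) ≤ n(n−1) ε. -/
open MeasureTheory ProbabilityTheory Filter Real Set Topology
open scoped ENNReal NNReal Classical

noncomputable section

/-- The `j`-th largest entry of the tuple `x` (`j = 0` gives the maximum, `j = 1` the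
second largest, ...); `0` when `j` is out of range. -/
def descStat {m : ℕ} (x : Fin m → ℝ) (j : ℕ) : ℝ :=
  if h : j < m then (x ∘ Tuple.sort x) ⟨m - 1 - j, by omega⟩ else 0

/-- The kernel of degree `m` obtained from `K` by applying it to the top-`q`
(descending) order statistics: `K_m(x_1,…,x_m) = K(x_{m:m},…,x_{m−q+1:m})`. -/
def Km {q : ℕ} (K : (Fin q → ℝ) → ℝ) (m : ℕ) (x : Fin m → ℝ) : ℝ :=
  K fun j => descStat x (j : ℕ)

/-- `K(a x_1 + b, …, a x_q + b) = K(x_1, …, x_q)` for all `a > 0`, `b ∈ ℝ`. -/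
def LocScaleInvariant {q : ℕ} (K : (Fin q → ℝ) → ℝ) : Prop :=
  ∀ a b : ℝ, 0 < a → ∀ x : Fin q → ℝ, K (fun j => a * x j + b) = K x

/-- `h_γ(y) = (y^γ - 1)/γ`, interpreted as `log y` when `γ = 0`. -/
def hGamma (γ : ℝ) (y : ℝ) : ℝ := if γ = 0 then Real.log y else (y ^ γ - 1) / γ

lemma measurable_hGamma (γ : ℝ) : Measurable (hGamma γ) := by
  unfold hGamma
  split_ifs
  · exact Real.measurable_log
  · fun_prop

/-- The uniform distribution on `(0,1)`. -/
def unif01 : Measure ℝ := volume.restrict (Set.Ioo (0:ℝ) 1)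

instance : IsProbabilityMeasure unif01 := ⟨by simp [unif01]⟩

/-- The standard Pareto(1) distribution, with cdf `1 - 1/y` for `y ≥ 1`. -/
def pareto1 : Measure ℝ := ProbabilityTheory.paretoMeasure 1 1

instance : IsProbabilityMeasure pareto1 :=
  ProbabilityTheory.isProbabilityMeasure_paretoMeasure one_pos one_pos

/-- The standard generalized Pareto distribution `GP(γ)`: the law of `h_γ(Y)` for `Y`
standard Pareto(1). -/
def gpMeasure (γ : ℝ) : Measure ℝ := pareto1.map (hGamma γ)

instance (γ : ℝ) : IsProbabilityMeasure (gpMeasure γ) :=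
  Measure.isProbabilityMeasure_map (measurable_hGamma γ).aemeasurable

/-- The unit exponential distribution: the law of `-log U` for `U` uniform on `(0,1)`. -/
def expMeasure1 : Measure ℝ := unif01.map fun u => -Real.log u

instance : IsProbabilityMeasure expMeasure1 :=
  Measure.isProbabilityMeasure_map Real.measurable_log.neg.aemeasurable

/-- The Erlang(q) distribution: the law of the sum of `q` independent unit exponentials. -/
def erlangMeasure (q : ℕ) : Measure ℝ :=
  (Measure.pi fun _ : Fin q => expMeasure1).map fun e => ∑ i, e i

instance (q : ℕ) : IsProbabilityMeasure (erlangMeasure q) :=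
  Measure.isProbabilityMeasure_map
    (Finset.measurable_sum _ fun i _ => measurable_pi_apply i).aemeasurable

/-- The joint law of `r` iid `GP(γ)` random variables. -/
def gpPi (γ : ℝ) (r : ℕ) : Measure (Fin r → ℝ) := Measure.pi fun _ => gpMeasure γ

instance (γ : ℝ) (r : ℕ) : IsProbabilityMeasure (gpPi γ r) := by
  unfold gpPi; infer_instance

/-- The vector `(Z_{q-j:q-1})_{j=1}^{q}`: the descending order statistics of
`z_1,…,z_{q-1}` with an extra last entry `Z_{0:q-1} := 0`. -/
def refVec {q : ℕ} (z : Fin (q-1) → ℝ) : Fin q → ℝ := fun j => descStat z (j : ℕ)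

/-- `θ = E[K((Z_{q-j:q-1})_{j=1}^{q})]` for iid `GP(γ)` variables `Z_1,…,Z_{q-1}`. -/
def thetaK (γ : ℝ) {q : ℕ} (K : (Fin q → ℝ) → ℝ) : ℝ :=
  ∫ z, K (refVec z) ∂(gpPi γ (q-1))

/-- all moments of `K((Z_{q-j:q-1})_{j=1}^{q})` are finite. -/
def MomentCond (γ : ℝ) {q : ℕ} (K : (Fin q → ℝ) → ℝ) : Prop :=
  ∀ p : ℝ, 0 < p →
    ∫⁻ z, ENNReal.ofReal (|K (refVec z)| ^ p) ∂(gpPi γ (q-1)) < ⊤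

/-- The asymptotic variance
`σ²_K(γ) = ∫_0^∞ (E[K̄_{q+1}((Z_{q-j:q-1})_{j=1}^q, h_γ(S_q/x))])² dx`. -/
def sigmaSqK (γ : ℝ) {q : ℕ} (K : (Fin q → ℝ) → ℝ) : ℝ :=
  ∫ x in Set.Ioi (0:ℝ),
    (∫ zs : (Fin (q-1) → ℝ) × ℝ,
        (Km K (q+1) (Fin.snoc (refVec zs.1) (hGamma γ (zs.2 / x))) - thetaK γ K)
      ∂((gpPi γ (q-1)).prod (erlangMeasure q))) ^ 2

/-- The U-statistic with kernel `K_m` evaluated on the sample `z`. -/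
def UStat {q : ℕ} (K : (Fin q → ℝ) → ℝ) (m n : ℕ) (z : Fin n → ℝ) : ℝ :=
  ((n.choose m : ℝ))⁻¹ *
    ∑ I ∈ Finset.powersetCard m (Finset.univ : Finset (Fin n)),
      Km K I.card fun j => z (I.orderIsoOfFin rfl j).1

/-- Condition on the degree sequence: `m = o(n^{1-ε})` and `log n = o(m^{1-δ})`. -/
def DegreeCond (m : ℕ → ℕ) : Prop :=
  ∃ ε > (0:ℝ), ∃ δ > (0:ℝ),
    Tendsto (fun n => (m n : ℝ) / (n : ℝ) ^ (1 - ε)) atTop (𝓝 0) ∧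
    Tendsto (fun n : ℕ => Real.log n / (m n : ℝ) ^ (1 - δ)) atTop (𝓝 0)

/-- `ζ_{m,ℓ} = cov(K_m(Z_S), K_m(Z_{S'}))` for the blocks `S = [1:m]`,
`S' = [(m-ℓ+1):(2m-ℓ)]` (zero-indexed here), which overlap in `ℓ` indices. -/
def zetaCov {Ω : Type*} [MeasurableSpace Ω] (P : Measure Ω) {q : ℕ}
    (K : (Fin q → ℝ) → ℝ) (Z : ℕ → Ω → ℝ) (m ℓ : ℕ) : ℝ :=
  (∫ ω, Km K m (fun i : Fin m => Z i ω) * Km K m (fun i : Fin m => Z (m - ℓ + i) ω) ∂P)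
    - (∫ ω, Km K m (fun i : Fin m => Z i ω) ∂P)
      * (∫ ω, Km K m (fun i : Fin m => Z (m - ℓ + i) ω) ∂P)

/-- Convergence in distribution to a Gaussian, expressed via pointwise convergence of
the cumulative distribution functions (the Gaussian cdf being continuous). -/
def TendstoGaussian {Ω : Type*} [MeasurableSpace Ω] (P : Measure Ω)
    (T : ℕ → Ω → ℝ) (μ : ℝ) (v : ℝ≥0) : Prop :=
  ∀ x : ℝ, Tendsto (fun n => (P {ω | T n ω ≤ x}).toReal) atTop
    (𝓝 ((gaussianReal μ v (Set.Iic x)).toReal))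

/-- Convergence in probability to the constant `c`. -/
def TendstoInProb {Ω : Type*} [MeasurableSpace Ω] (P : Measure Ω)
    (T : ℕ → Ω → ℝ) (c : ℝ) : Prop :=
  ∀ ε : ℝ, 0 < ε → Tendsto (fun n => (P {ω | ε ≤ |T n ω - c|}).toReal) atTop (𝓝 0)

/-!
Integrate the pointwise chain `2 · 1{k ≥ 2} ≤ k - 1{k = 1} ≤ 2 (k - 1{k ≥ 1}) ≤ k (k - 1)` at
`k = N`. The product `N (N - 1)` counts the ordered pairs of distinct events that occur together,
so its integral is the sum of the measures of the pairwise intersections.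
-/

lemma two_mul_indicator_Ici_two_le (k : ℕ) :
    2 * (Ici 2).indicator (1 : ℕ → ℝ) k ≤ k - ({1} : Set ℕ).indicator (1 : ℕ → ℝ) k := by
  rcases (by omega : k = 0 ∨ k = 1 ∨ 2 ≤ k) with rfl | rfl | hk
  · simp
  · simp
  · simp [hk, show k ≠ 1 by omega]

lemma natCast_sub_indicator_singleton_one_le (k : ℕ) :
    k - ({1} : Set ℕ).indicator (1 : ℕ → ℝ) k ≤ 2 * (k - (Ici 1).indicator (1 : ℕ → ℝ) k) := by
  rcases (by omega : k = 0 ∨ k = 1 ∨ 2 ≤ k) with rfl | rfl | hk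
  · simp
  · simp
  · have hcast : (2 : ℝ) ≤ k := by exact_mod_cast hk
    rw [indicator_of_notMem (by simp; omega), indicator_of_mem (by simp; omega), Pi.one_apply]
    linarith

lemma two_mul_natCast_sub_indicator_Ici_one_le (k : ℕ) :
    2 * (k - (Ici 1).indicator (1 : ℕ → ℝ) k) ≤ k * (k - 1) := by
  rcases (by omega : k = 0 ∨ k = 1 ∨ 2 ≤ k) with rfl | rfl | hk
  · simp
  · simp
  · have hcast : (2 : ℝ) ≤ k := by exact_mod_cast hk
    rw [indicator_of_mem (by simp; omega), Pi.one_apply]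
    nlinarith

lemma sum_offDiag_le_card_mul {ι R : Type*} [Ring R] [PartialOrder R] [IsOrderedAddMonoid R]
    {s : Finset ι} {f : ι → ι → R} {ε : R}
    (hf : (s : Set ι).Pairwise fun i j => f i j ≤ ε) :
    ∑ p ∈ s.offDiag, f p.1 p.2 ≤ s.card * (s.card - 1) * ε := by
  calc ∑ p ∈ s.offDiag, f p.1 p.2
      ≤ s.offDiag.card • ε := Finset.sum_le_card_nsmul _ _ _ fun p hp => by
        obtain ⟨hi, hj, hij⟩ := Finset.mem_offDiag.1 hp
        exact hf hi hj hij
    _ = s.card * (s.card - 1) * ε := by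
        rw [Finset.offDiag_card, nsmul_eq_mul, Nat.cast_sub (Nat.le_mul_self _), Nat.cast_mul,
          mul_sub_one]

section NatValued

variable {Ω : Type*} [MeasurableSpace Ω] {μ : Measure Ω}

lemma integrable_indicator_one₀ {s : Set Ω} (hs : NullMeasurableSet s μ) (hμs : μ s ≠ ∞) :
    Integrable (s.indicator (1 : Ω → ℝ)) μ :=
  (integrableOn_const (C := (1 : ℝ)) hμs).integrable_indicator₀ hs

lemma integral_indicator_one₀ {s : Set Ω} (hs : NullMeasurableSet s μ) :
    ∫ ω, s.indicator (1 : Ω → ℝ) ω ∂μ = μ.real s := by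
  simp [integral_indicator₀ hs]

variable {N : Ω → ℕ}

lemma nullMeasurableSet_preimage_of_aemeasurable_natCast
    (hN : AEMeasurable (fun ω => (N ω : ℝ)) μ) (t : Set ℕ) : NullMeasurableSet (N ⁻¹' t) μ := by
  have hfloor : AEMeasurable N μ := by
    simpa only [Function.comp_def, Nat.floor_natCast] using
      Nat.measurable_floor.comp_aemeasurable hN
  exact hfloor.nullMeasurableSet_preimage .of_discrete

lemma measure_preimage_ne_top_of_integrable_natCast (hN : Integrable (fun ω => (N ω : ℝ)) μ)
    {t : Set ℕ} (ht : 0 ∉ t) : μ (N ⁻¹' t) ≠ ∞ := by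
  refine ne_top_of_le_ne_top (hN.measure_norm_ge_lt_top one_pos).ne (measure_mono fun ω hω => ?_)
  have hpos : N ω ≠ 0 := fun h => ht (h ▸ hω)
  simpa [Nat.one_le_iff_ne_zero] using hpos

lemma integrable_natCast_sub_indicator (hN : Integrable (fun ω => (N ω : ℝ)) μ)
    {t : Set ℕ} (ht : 0 ∉ t) :
    Integrable (fun ω => N ω - (N ⁻¹' t).indicator (1 : Ω → ℝ) ω) μ :=
  hN.sub <| integrable_indicator_one₀
    (nullMeasurableSet_preimage_of_aemeasurable_natCast hN.aemeasurable t)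
    (measure_preimage_ne_top_of_integrable_natCast hN ht)

lemma integral_natCast_sub_indicator (hN : Integrable (fun ω => (N ω : ℝ)) μ)
    {t : Set ℕ} (ht : 0 ∉ t) :
    ∫ ω, (N ω - (N ⁻¹' t).indicator (1 : Ω → ℝ) ω) ∂μ
      = ∫ ω, (N ω : ℝ) ∂μ - μ.real (N ⁻¹' t) := by
  have ht_null := nullMeasurableSet_preimage_of_aemeasurable_natCast hN.aemeasurable t
  rw [integral_sub hN (integrable_indicator_one₀ ht_null
    (measure_preimage_ne_top_of_integrable_natCast hN ht)), integral_indicator_one₀ ht_null]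

theorem two_mul_measureReal_two_le_le (hN : Integrable (fun ω => (N ω : ℝ)) μ) :
    2 * μ.real {ω | 2 ≤ N ω} ≤ ∫ ω, (N ω : ℝ) ∂μ - μ.real {ω | N ω = 1} := by
  have hnull : NullMeasurableSet {ω | 2 ≤ N ω} μ :=
    nullMeasurableSet_preimage_of_aemeasurable_natCast hN.aemeasurable (Ici 2)
  have hfin : μ {ω | 2 ≤ N ω} ≠ ∞ :=
    measure_preimage_ne_top_of_integrable_natCast hN (t := Ici 2) (by simp)
  have hone : (0 : ℕ) ∉ ({1} : Set ℕ) := by simp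
  calc 2 * μ.real {ω | 2 ≤ N ω}
      = ∫ ω, 2 * {ω | 2 ≤ N ω}.indicator (1 : Ω → ℝ) ω ∂μ := by
        rw [integral_const_mul, integral_indicator_one₀ hnull]
    _ ≤ ∫ ω, (N ω - (N ⁻¹' {1}).indicator (1 : Ω → ℝ) ω) ∂μ :=
        integral_mono ((integrable_indicator_one₀ hnull hfin).const_mul 2)
          (integrable_natCast_sub_indicator hN hone) fun ω => two_mul_indicator_Ici_two_le (N ω)
    _ = ∫ ω, (N ω : ℝ) ∂μ - μ.real {ω | N ω = 1} := integral_natCast_sub_indicator hN hone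

theorem integral_sub_measureReal_eq_one_le (hN : Integrable (fun ω => (N ω : ℝ)) μ) :
    ∫ ω, (N ω : ℝ) ∂μ - μ.real {ω | N ω = 1}
      ≤ 2 * (∫ ω, (N ω : ℝ) ∂μ - μ.real {ω | 1 ≤ N ω}) := by
  have hone : (0 : ℕ) ∉ ({1} : Set ℕ) := by simp
  have hpos : (0 : ℕ) ∉ Ici 1 := by simp
  have hsub : ∫ ω, (N ω - (N ⁻¹' Ici 1).indicator (1 : Ω → ℝ) ω) ∂μ
      = ∫ ω, (N ω : ℝ) ∂μ - μ.real {ω | 1 ≤ N ω} := integral_natCast_sub_indicator hN hpos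
  calc ∫ ω, (N ω : ℝ) ∂μ - μ.real {ω | N ω = 1}
      = ∫ ω, (N ω - (N ⁻¹' {1}).indicator (1 : Ω → ℝ) ω) ∂μ :=
        (integral_natCast_sub_indicator hN hone).symm
    _ ≤ ∫ ω, 2 * (N ω - (N ⁻¹' Ici 1).indicator (1 : Ω → ℝ) ω) ∂μ :=
        integral_mono (integrable_natCast_sub_indicator hN hone)
          ((integrable_natCast_sub_indicator hN hpos).const_mul 2)
          fun ω => natCast_sub_indicator_singleton_one_le (N ω)
    _ = 2 * (∫ ω, (N ω : ℝ) ∂μ - μ.real {ω | 1 ≤ N ω}) := by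
        rw [integral_const_mul, hsub]

theorem two_mul_integral_sub_measureReal_one_le_le (hN : Integrable (fun ω => (N ω : ℝ)) μ)
    (hN₂ : Integrable (fun ω => (N ω : ℝ) * (N ω - 1)) μ) :
    2 * (∫ ω, (N ω : ℝ) ∂μ - μ.real {ω | 1 ≤ N ω}) ≤ ∫ ω, (N ω : ℝ) * (N ω - 1) ∂μ := by
  have hpos : (0 : ℕ) ∉ Ici 1 := by simp
  have hsub : ∫ ω, (N ω - (N ⁻¹' Ici 1).indicator (1 : Ω → ℝ) ω) ∂μ
      = ∫ ω, (N ω : ℝ) ∂μ - μ.real {ω | 1 ≤ N ω} := integral_natCast_sub_indicator hN hpos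
  calc 2 * (∫ ω, (N ω : ℝ) ∂μ - μ.real {ω | 1 ≤ N ω})
      = ∫ ω, 2 * (N ω - (N ⁻¹' Ici 1).indicator (1 : Ω → ℝ) ω) ∂μ := by
        rw [integral_const_mul, hsub]
    _ ≤ ∫ ω, (N ω : ℝ) * (N ω - 1) ∂μ :=
        integral_mono ((integrable_natCast_sub_indicator hN hpos).const_mul 2) hN₂
          fun ω => two_mul_natCast_sub_indicator_Ici_one_le (N ω)

end NatValued

section EventCount

variable {Ω ι : Type*}

/-- The counting variable `∑_{i ∈ s} 1_{A i}` of a finite family of events, as a natural number. -/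
def eventCount (s : Finset ι) (A : ι → Set Ω) (ω : Ω) : ℕ := (s.filter fun i => ω ∈ A i).card

variable {s : Finset ι} {A : ι → Set Ω}

lemma eventCount_eq_sum_indicator (ω : Ω) :
    (eventCount s A ω : ℝ) = ∑ i ∈ s, (A i).indicator (1 : Ω → ℝ) ω := by
  simp [eventCount, indicator_apply]

lemma eventCount_mul_sub_one_eq_sum_indicator (ω : Ω) :
    (eventCount s A ω : ℝ) * (eventCount s A ω - 1)
      = ∑ p ∈ s.offDiag, (A p.1 ∩ A p.2).indicator (1 : Ω → ℝ) ω := by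
  have hpairs : (s.offDiag.filter fun p => ω ∈ A p.1 ∩ A p.2)
      = (s.filter fun i => ω ∈ A i).offDiag := by
    ext p
    simp only [Finset.mem_filter, Finset.mem_offDiag, Set.mem_inter_iff]
    tauto
  simp only [indicator_apply, Pi.one_apply]
  rw [Finset.sum_boole, hpairs, Finset.offDiag_card, Nat.cast_sub (Nat.le_mul_self _), Nat.cast_mul,
    ← eventCount]
  ring

variable [MeasurableSpace Ω] {μ : Measure Ω}

lemma integrable_eventCount (hA : ∀ i ∈ s, NullMeasurableSet (A i) μ)
    (hμA : ∀ i ∈ s, μ (A i) ≠ ∞) : Integrable (fun ω => (eventCount s A ω : ℝ)) μ := by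
  simp only [eventCount_eq_sum_indicator]
  exact integrable_finsetSum _ fun i hi => integrable_indicator_one₀ (hA i hi) (hμA i hi)

lemma integrable_indicator_inter_of_mem_offDiag (hA : ∀ i ∈ s, NullMeasurableSet (A i) μ)
    (hμA : ∀ i ∈ s, μ (A i) ≠ ∞) {p : ι × ι} (hp : p ∈ s.offDiag) :
    Integrable ((A p.1 ∩ A p.2).indicator (1 : Ω → ℝ)) μ := by
  obtain ⟨hi, hj, -⟩ := Finset.mem_offDiag.1 hp
  exact integrable_indicator_one₀ ((hA _ hi).inter (hA _ hj))
    (measure_inter_ne_top_of_left_ne_top (hμA _ hi))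

lemma integrable_eventCount_mul_sub_one (hA : ∀ i ∈ s, NullMeasurableSet (A i) μ)
    (hμA : ∀ i ∈ s, μ (A i) ≠ ∞) :
    Integrable (fun ω => (eventCount s A ω : ℝ) * (eventCount s A ω - 1)) μ := by
  simp only [eventCount_mul_sub_one_eq_sum_indicator]
  exact integrable_finsetSum _ fun p hp => integrable_indicator_inter_of_mem_offDiag hA hμA hp

lemma integral_eventCount_mul_sub_one (hA : ∀ i ∈ s, NullMeasurableSet (A i) μ)
    (hμA : ∀ i ∈ s, μ (A i) ≠ ∞) :
    ∫ ω, (eventCount s A ω : ℝ) * (eventCount s A ω - 1) ∂μ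
      = ∑ p ∈ s.offDiag, μ.real (A p.1 ∩ A p.2) := by
  simp only [eventCount_mul_sub_one_eq_sum_indicator]
  rw [integral_finsetSum _ fun p hp => integrable_indicator_inter_of_mem_offDiag hA hμA hp]
  refine Finset.sum_congr rfl fun p hp => ?_
  obtain ⟨hi, hj, -⟩ := Finset.mem_offDiag.1 hp
  exact integral_indicator_one₀ ((hA _ hi).inter (hA _ hj))

theorem counting_variable_inequalities_general (hA : ∀ i ∈ s, NullMeasurableSet (A i) μ)
    (hμA : ∀ i ∈ s, μ (A i) ≠ ∞) {ε : ℝ}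
    (hε : (s : Set ι).Pairwise fun i j => μ.real (A i ∩ A j) ≤ ε) :
    2 * μ.real {ω | 2 ≤ eventCount s A ω}
        ≤ ∫ ω, (eventCount s A ω : ℝ) ∂μ - μ.real {ω | eventCount s A ω = 1}
    ∧ ∫ ω, (eventCount s A ω : ℝ) ∂μ - μ.real {ω | eventCount s A ω = 1}
        ≤ 2 * (∫ ω, (eventCount s A ω : ℝ) ∂μ - μ.real {ω | 1 ≤ eventCount s A ω})
    ∧ 2 * (∫ ω, (eventCount s A ω : ℝ) ∂μ - μ.real {ω | 1 ≤ eventCount s A ω})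
        ≤ s.card * (s.card - 1) * ε := by
  have hN := integrable_eventCount hA hμA
  refine ⟨two_mul_measureReal_two_le_le hN, integral_sub_measureReal_eq_one_le hN, ?_⟩
  calc 2 * (∫ ω, (eventCount s A ω : ℝ) ∂μ - μ.real {ω | 1 ≤ eventCount s A ω})
      ≤ ∫ ω, (eventCount s A ω : ℝ) * (eventCount s A ω - 1) ∂μ :=
        two_mul_integral_sub_measureReal_one_le_le hN (integrable_eventCount_mul_sub_one hA hμA)
    _ = ∑ p ∈ s.offDiag, μ.real (A p.1 ∩ A p.2) := integral_eventCount_mul_sub_one hA hμA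
    _ ≤ s.card * (s.card - 1) * ε := sum_offDiag_le_card_mul hε

end EventCount

/-- Lemma: counting variable inequalities.
If `N = Σ_i 1_{A_i}` and `E[1_{A_i} 1_{A_j}] ≤ ε` for `i ≠ j`, then
`2 P(N ≥ 2) ≤ E(N) - P(N = 1) ≤ 2 (E(N) - P(N ≥ 1)) ≤ n(n-1)ε`. -/
theorem counting_variable_inequalities
    {Ω : Type*} [MeasurableSpace Ω] (P : Measure Ω) [IsProbabilityMeasure P]
    (n : ℕ) (A : Fin n → Set Ω) (hA : ∀ i, MeasurableSet (A i))
    (ε : ℝ) (hε : ∀ i j : Fin n, i ≠ j → (P (A i ∩ A j)).toReal ≤ ε)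
    (N : Ω → ℕ) (hN : ∀ ω, N ω = (Finset.univ.filter fun i => ω ∈ A i).card) :
    2 * (P {ω | 2 ≤ N ω}).toReal
        ≤ (∫ ω, (N ω : ℝ) ∂P) - (P {ω | N ω = 1}).toReal
    ∧ (∫ ω, (N ω : ℝ) ∂P) - (P {ω | N ω = 1}).toReal
        ≤ 2 * ((∫ ω, (N ω : ℝ) ∂P) - (P {ω | 1 ≤ N ω}).toReal)
    ∧ 2 * ((∫ ω, (N ω : ℝ) ∂P) - (P {ω | 1 ≤ N ω}).toReal)
        ≤ (n : ℝ) * ((n : ℝ) - 1) * ε := by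
  obtain rfl : N = eventCount Finset.univ A := funext hN
  simpa only [Measure.real, Finset.card_univ, Fintype.card_fin] using
    counting_variable_inequalities_general (μ := P) (s := Finset.univ)
      (fun i _ => (hA i).nullMeasurableSet) (fun i _ => measure_ne_top P (A i))
      (fun i _ j _ hij => hε i j hij)

end
end

section
/- Let γ ∈ ℝ, let q ≥ 1 and let ℓ, m be integers with ℓ ≥ 2 and m ≥ ℓ + q. Let Z_1,…,Z_{2m−ℓ} be iid standard GP(γ) (or more generally iid with a continuous distribution), and for i ∈ {m−ℓ+1,…,m} let 1_{i,ℓ,m} be the indicator of the event that Z_i is in the top-q of Z_{[1:m]} or in the top-q of Z_{[(m−ℓ+1):(2m−ℓ)]}. Then E[1_{m−1,ℓ,m} · 1_{m,ℓ,m}] ≤ 2(2q² − q)/((m−1)(m−ℓ+1)). -/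
open MeasureTheory ProbabilityTheory Filter Real Set Topology
open scoped ENNReal NNReal Classical

noncomputable section

/-- `Z_i` is among the `q` largest of the values `(Z_a)_{a ∈ S}` (for `i ∈ S`):
fewer than `q` members of `S` are strictly larger. -/
def inTopQ (q : ℕ) {Ω : Type*} (Z : ℕ → Ω → ℝ) (S : Finset ℕ) (i : ℕ) (ω : Ω) : Prop :=
  (S.filter fun a => Z i ω < Z a ω).card < q

/-- The counting variable `N_{ℓ,m}`: the number of `i ∈ [(m-ℓ+1):m]` such that `Z_i` is
in the top-`q` of `Z_{[1:m]}` or of `Z_{[(m-ℓ+1):(2m-ℓ)]}`. -/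
def Ncount (q : ℕ) {Ω : Type*} (Z : ℕ → Ω → ℝ) (ℓ m : ℕ) (ω : Ω) : ℕ :=
  ((Finset.Icc (m - ℓ + 1) m).filter fun i =>
    inTopQ q Z (Finset.Icc 1 m) i ω ∨
      inTopQ q Z (Finset.Icc (m - ℓ + 1) (2 * m - ℓ)) i ω).card

/-- The kernel `K_{|S|}` applied to the subsample `(Z_a)_{a ∈ S}`. -/
def KmOn {q : ℕ} (K : (Fin q → ℝ) → ℝ) {Ω : Type*} (Z : ℕ → Ω → ℝ)
    (S : Finset ℕ) (ω : Ω) : ℝ :=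
  Km K S.card fun j => Z (S.orderIsoOfFin rfl j).1 ω

/-- `Ξ_{ℓ,m} = K_m(Z_{[1:m]}) K_m(Z_{[(m-ℓ+1):(2m-ℓ)]})`. -/
def XiRV {q : ℕ} (K : (Fin q → ℝ) → ℝ) {Ω : Type*} (Z : ℕ → Ω → ℝ)
    (ℓ m : ℕ) (ω : Ω) : ℝ :=
  KmOn K Z (Finset.Icc 1 m) ω * KmOn K Z (Finset.Icc (m - ℓ + 1) (2 * m - ℓ)) ω

/-!
Each pair of top-`q` events is bounded by double counting. By exchangeability, the probability
that `Z_i` is in the top-`q` of `S` and `Z_j` in the top-`q` of `T` takes the same value on all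
pairs `(i, j)` that a permutation preserving `S` and `T` can reach, while without ties at most `q`
indices of a block are in its top-`q`. When `S = T` this averages over the ordered pairs of
distinct elements of the block and gives `q (q - 1) / (m (m - 1))`. When `S ≠ T`, first shrink the
blocks to the disjoint sets `S \ {j}` and `(T \ S) ∪ {j}`, which only enlarges the events, and
average over their product to get `q² / ((m - 1) (m - ℓ + 1))`. The union bound over the four
cases concludes.
-/

section AlmostSure

open scoped Finset

variable {Ω κ : Type*} [MeasurableSpace Ω] {P : Measure Ω} {s : Finset κ} {E : κ → Set Ω} {n : ℕ}

lemma sum_measure_le_of_card_filter_le [∀ ω, DecidablePred (ω ∈ E ·)]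
    (hE : ∀ k ∈ s, NullMeasurableSet (E k) P) (hn : ∀ᵐ ω ∂P, #{k ∈ s | ω ∈ E k} ≤ n) :
    ∑ k ∈ s, P (E k) ≤ n * P univ :=
  calc ∑ k ∈ s, P (E k) = ∑ k ∈ s, ∫⁻ ω, (E k).indicator 1 ω ∂P :=
        Finset.sum_congr rfl fun k hk => (lintegral_indicator_one₀ (hE k hk)).symm
    _ = ∫⁻ ω, ∑ k ∈ s, (E k).indicator 1 ω ∂P :=
        (lintegral_finsetSum' s fun k hk => aemeasurable_one.indicator₀ (hE k hk)).symm
    _ ≤ ∫⁻ _, n ∂P := lintegral_mono_ae <| hn.mono fun ω hω => by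
        simpa only [indicator_apply, Pi.one_apply, Finset.sum_boole, Nat.cast_le] using hω
    _ = n * P univ := lintegral_const _

lemma card_mul_measureReal_le_of_card_filter_le [IsProbabilityMeasure P]
    [∀ ω, DecidablePred (ω ∈ E ·)] {F : Set Ω}
    (hE : ∀ k ∈ s, NullMeasurableSet (E k) P) (hF : ∀ k ∈ s, P (E k) = P F)
    (hn : ∀ᵐ ω ∂P, #{k ∈ s | ω ∈ E k} ≤ n) : (#s : ℝ) * P.real F ≤ n := by
  have hsum : (#s : ℝ≥0∞) * P F ≤ n := by
    simpa only [Finset.sum_congr rfl hF, Finset.sum_const, nsmul_eq_mul, measure_univ, mul_one]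
      using sum_measure_le_of_card_filter_le hE hn
  simpa only [Measure.real, ENNReal.toReal_mul, ENNReal.toReal_natCast]
    using ENNReal.toReal_mono (ENNReal.natCast_ne_top n) hsum

lemma measureReal_union_inter_union_le [IsFiniteMeasure P] (A B C D : Set Ω) :
    P.real ((A ∪ B) ∩ (C ∪ D)) ≤
      P.real (A ∩ C) + P.real (B ∩ D) + P.real (A ∩ D) + P.real (B ∩ C) := by
  rw [union_inter_distrib_right, inter_union_distrib_left, inter_union_distrib_left]
  linarith [measureReal_union_le (μ := P) (A ∩ C ∪ A ∩ D) (B ∩ C ∪ B ∩ D),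
    measureReal_union_le (μ := P) (A ∩ C) (A ∩ D), measureReal_union_le (μ := P) (B ∩ C) (B ∩ D)]

lemma ae_injOn_of_pairwise_ae_ne {ι α : Type*} {X : ι → Ω → α}
    (hne : Pairwise fun a b => ∀ᵐ ω ∂P, X a ω ≠ X b ω) (S : Finset ι) :
    ∀ᵐ ω ∂P, InjOn (fun a => X a ω) S := by
  have hall : ∀ᵐ ω ∂P, ∀ a ∈ S, ∀ b ∈ S, a ≠ b → X a ω ≠ X b ω := by
    simp only [Filter.eventually_all_finset]
    intro a _ b _
    by_cases hab : a = b
    · exact .of_forall fun _ h => absurd hab h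
    · exact (hne hab).mono fun _ h _ => h
  exact hall.mono fun ω hω a ha b hb h => not_imp_not.1 (hω a ha b hb) h

end AlmostSure

section Permutations

variable {ι : Type*} {i j i' j' : ι}

lemma map_swap_eq_self [DecidableEq ι] {S : Finset ι} (h : i ∈ S ↔ j ∈ S) :
    S.map (Equiv.swap i j).toEmbedding = S :=
  Finset.coe_injective <| by
    simpa using (Equiv.swap_bijOn_self (s := (S : Set ι)) (by simpa using h)).image_eq

lemma exists_perm_pair_map_eq (hij : i ≠ j) (hij' : i' ≠ j') :
    ∃ σ : Equiv.Perm ι, σ i = i' ∧ σ j = j' ∧ ∀ S : Finset ι, (i ∈ S ↔ i' ∈ S) →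
      (j ∈ S ↔ j' ∈ S) → S.map σ.toEmbedding = S := by
  set k := Equiv.swap i i' j with hk
  have hk_ne : i' ≠ k := by
    simpa only [Equiv.swap_apply_left] using (Equiv.swap i i').injective.ne hij
  refine ⟨(Equiv.swap i i').trans (Equiv.swap k j'), ?_, ?_, fun S hi hj => ?_⟩
  · rw [Equiv.trans_apply, Equiv.swap_apply_left, Equiv.swap_apply_of_ne_of_ne hk_ne hij']
  · rw [Equiv.trans_apply, ← hk, Equiv.swap_apply_left]
  · have hmap := map_swap_eq_self hi
    have hkS : k ∈ S ↔ j ∈ S := by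
      conv_lhs => rw [← hmap]
      exact Finset.mem_map' (Equiv.swap i i').toEmbedding
    rw [Equiv.trans_toEmbedding, ← Finset.map_map, hmap, map_swap_eq_self (hkS.trans hj)]

end Permutations

section TopEvent

open scoped Finset

variable {Ω ι α : Type*} [LinearOrder α]

/-- The event that `X i` is among the `q` largest of the values `(X a)_{a ∈ S}`, encoded as in
`inTopQ` by asking that fewer than `q` of these values exceed `X i`; it does not require `i ∈ S`. -/
def topEvent (q : ℕ) (X : ι → Ω → α) (S : Finset ι) (i : ι) : Set Ω :=
  {ω | #{a ∈ S | X i ω < X a ω} < q}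

variable {q : ℕ} {X : ι → Ω → α} {S T : Finset ι}

lemma topEvent_anti (hTS : T ⊆ S) (i : ι) : topEvent q X S i ⊆ topEvent q X T i :=
  fun _ => (Finset.card_le_card <| Finset.filter_subset_filter _ hTS).trans_lt

lemma topEvent_comp_perm (σ : Equiv.Perm ι) (i : ι) :
    topEvent q (fun a => X (σ a)) S i = topEvent q X (S.map σ.toEmbedding) (σ i) := by
  ext ω
  simp only [topEvent, mem_ofPred_eq, Finset.filter_map, Finset.card_map, Function.comp_def,
    Equiv.coe_toEmbedding]

lemma card_filter_mem_topEvent_le {ω : Ω} (hinj : InjOn (fun a => X a ω) S) :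
    #{i ∈ S | ω ∈ topEvent q X S i} ≤ q := by
  obtain h | hne := Finset.eq_empty_or_nonempty {i ∈ S | ω ∈ topEvent q X S i}
  · simp only [h, Finset.card_empty, zero_le]
  obtain ⟨i, hi, hmin⟩ := Finset.exists_min_image _ (fun i => X i ω) hne
  have hiS := Finset.mem_filter.1 hi
  have habove : ({i ∈ S | ω ∈ topEvent q X S i} : Finset ι).erase i ⊆
      {a ∈ S | X i ω < X a ω} := by
    intro a ha
    obtain ⟨hai, ha⟩ := Finset.mem_erase.1 ha
    have haS := (Finset.mem_filter.1 ha).1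
    exact Finset.mem_filter.2
      ⟨haS, (hmin a ha).lt_of_ne fun h => hai (hinj haS hiS.1 h.symm)⟩
  have hlt : #{a ∈ S | X i ω < X a ω} < q := hiS.2
  have hle := Finset.card_le_card habove
  rw [Finset.card_erase_of_mem hi] at hle
  omega

lemma card_filter_offDiag_mem_topEvent_le {ω : Ω}
    (hinj : InjOn (fun a => X a ω) S) :
    #{w ∈ S.offDiag | ω ∈ topEvent q X S w.1 ∩ topEvent q X S w.2} ≤ q * q - q := by
  set R : Finset ι := {i ∈ S | ω ∈ topEvent q X S i}
  have hR : #R ≤ q := card_filter_mem_topEvent_le hinj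
  calc _ ≤ #R.offDiag := Finset.card_le_card fun w => by
        simp only [R, Finset.mem_filter, Finset.mem_offDiag, mem_inter_iff]
        tauto
    _ = #R * (#R - 1) := by rw [Finset.offDiag_card, Nat.mul_sub_one]
    _ ≤ q * (q - 1) := Nat.mul_le_mul hR (Nat.sub_le_sub_right hR 1)
    _ = q * q - q := Nat.mul_sub_one q q

lemma card_filter_product_mem_topEvent_le {ω : Ω} (hS : InjOn (fun a => X a ω) S)
    (hT : InjOn (fun a => X a ω) T) :
    #{w ∈ S ×ˢ T | ω ∈ topEvent q X S w.1 ∩ topEvent q X T w.2} ≤ q * q := by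
  simp only [mem_inter_iff]
  rw [Finset.filter_product (fun i => ω ∈ topEvent q X S i) (fun i => ω ∈ topEvent q X T i),
    Finset.card_product]
  exact Nat.mul_le_mul (card_filter_mem_topEvent_le hS) (card_filter_mem_topEvent_le hT)

variable [TopologicalSpace α] [OrderClosedTopology α] [SecondCountableTopology α]
  [MeasurableSpace α] [OpensMeasurableSpace α] [MeasurableSpace Ω]

lemma measurableSet_topEvent (q : ℕ) (hX : ∀ a, Measurable (X a)) (S : Finset ι) (i : ι) :
    MeasurableSet (topEvent q X S i) := by
  have hcount : Measurable fun ω => #{a ∈ S | X i ω < X a ω} := by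
    simp only [Finset.card_filter]
    exact Finset.measurable_sum _ fun a _ =>
      .ite (measurableSet_lt (hX i) (hX a)) measurable_const measurable_const
  exact hcount measurableSet_Iio

end TopEvent

section Exchangeable

open scoped Finset

variable {Ω ι α : Type*} [MeasurableSpace Ω] [MeasurableSpace α]

/-- A family of random variables is exchangeable if its joint law is invariant under permutations
of the index set. Arbitrary permutations are allowed; since the joint law is determined by its
finite-dimensional marginals, this agrees with invariance under the finitely supported ones. -/
def Exchangeable (X : ι → Ω → α) (P : Measure Ω) : Prop :=
  ∀ σ : Equiv.Perm ι, IdentDistrib (fun ω a => X (σ a) ω) (fun ω a => X a ω) P P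

variable {P : Measure Ω} {X : ι → Ω → α}

lemma exchangeable_of_iIndepFun [Countable ι] (hindep : iIndepFun X P)
    (hident : ∀ a b, IdentDistrib (X a) (X b) P P) : Exchangeable X P :=
  fun σ => .pi (fun a => hident (σ a) a) (hindep.precomp σ.injective) hindep

lemma ae_ne_of_indepFun [MeasurableEq α] [IsFiniteMeasure P] {Y Z : Ω → α}
    (hY : AEMeasurable Y P) (hZ : AEMeasurable Z P) (hYZ : IndepFun Y Z P)
    [NullSingletonClass (P.map Z)] : ∀ᵐ ω ∂P, Y ω ≠ Z ω := by
  have hdiag : P.map (fun ω => (Y ω, Z ω)) (diagonal α) = 0 := by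
    rw [(indepFun_iff_map_prod_eq_prod_map_map hY hZ).1 hYZ,
      Measure.measure_prod_null measurableSet_diagonal]
    refine .of_forall fun x => ?_
    have hslice : Prod.mk x ⁻¹' diagonal α = {x} := by
      ext y
      simp only [mem_preimage, mem_diagonal_iff, mem_singleton_iff, eq_comm]
    simp only [hslice, measure_singleton, Pi.zero_apply]
  rw [Measure.map_apply_of_aemeasurable (hY.prodMk hZ) measurableSet_diagonal] at hdiag
  exact measure_mono_null (fun _ => not_not.1) hdiag

namespace Exchangeable

variable [LinearOrder α] [TopologicalSpace α] [OrderClosedTopology α] [SecondCountableTopology α]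
  [OpensMeasurableSpace α] {S T : Finset ι} {i j : ι}

lemma nullMeasurableSet_topEvent (hX : Exchangeable X P) (q : ℕ) (S : Finset ι) (i : ι) :
    NullMeasurableSet (topEvent q X S i) P :=
  (hX 1).aemeasurable_snd.nullMeasurableSet_preimage
    (measurableSet_topEvent q (measurable_pi_apply (X := fun _ : ι => α)) S i)

lemma measure_topEvent_inter_map (hX : Exchangeable X P) (q : ℕ) (S T : Finset ι) (i j : ι)
    (σ : Equiv.Perm ι) :
    P (topEvent q X (S.map σ.toEmbedding) (σ i) ∩ topEvent q X (T.map σ.toEmbedding) (σ j)) =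
      P (topEvent q X S i ∩ topEvent q X T j) := by
  rw [← topEvent_comp_perm, ← topEvent_comp_perm]
  exact (hX σ).measure_mem_eq <|
    (measurableSet_topEvent q (measurable_pi_apply (X := fun _ : ι => α)) S i).inter
      (measurableSet_topEvent q (measurable_pi_apply (X := fun _ : ι => α)) T j)

lemma measure_topEvent_inter_eq (hX : Exchangeable X P) (q : ℕ) {i' j' : ι} (hij : i ≠ j)
    (hij' : i' ≠ j') (hiS : i ∈ S ↔ i' ∈ S) (hjS : j ∈ S ↔ j' ∈ S) (hiT : i ∈ T ↔ i' ∈ T)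
    (hjT : j ∈ T ↔ j' ∈ T) :
    P (topEvent q X S i' ∩ topEvent q X T j') = P (topEvent q X S i ∩ topEvent q X T j) := by
  obtain ⟨σ, rfl, rfl, hσ⟩ := exists_perm_pair_map_eq hij hij'
  simpa only [hσ S hiS hjS, hσ T hiT hjT] using hX.measure_topEvent_inter_map q S T i j σ

variable [IsProbabilityMeasure P]

lemma card_mul_measureReal_topEvent_inter_self_le (hX : Exchangeable X P)
    (hne : Pairwise fun a b => ∀ᵐ ω ∂P, X a ω ≠ X b ω) (q : ℕ) (hi : i ∈ S) (hj : j ∈ S)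
    (hij : i ≠ j) :
    (#S * (#S - 1) : ℝ) * P.real (topEvent q X S i ∩ topEvent q X S j) ≤ q * (q - 1) := by
  have haverage : (#S.offDiag : ℝ) * P.real (topEvent q X S i ∩ topEvent q X S j) ≤
      (q * q - q : ℕ) := by
    have hE (w : ι × ι) (_ : w ∈ S.offDiag) :
        NullMeasurableSet (topEvent q X S w.1 ∩ topEvent q X S w.2) P :=
      (hX.nullMeasurableSet_topEvent q S w.1).inter (hX.nullMeasurableSet_topEvent q S w.2)
    refine card_mul_measureReal_le_of_card_filter_le hE (fun w hw => ?_)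
      ((ae_injOn_of_pairwise_ae_ne hne S).mono fun _ => card_filter_offDiag_mem_topEvent_le)
    obtain ⟨hi', hj', hij'⟩ := Finset.mem_offDiag.1 hw
    exact hX.measure_topEvent_inter_eq q hij hij' (iff_of_true hi hi') (iff_of_true hj hj')
      (iff_of_true hi hi') (iff_of_true hj hj')
  rw [Finset.offDiag_card, Nat.cast_sub (Nat.le_mul_self _), Nat.cast_sub (Nat.le_mul_self _)]
    at haverage
  push_cast at haverage
  linarith

lemma card_mul_measureReal_topEvent_inter_le_of_disjoint (hX : Exchangeable X P)
    (hne : Pairwise fun a b => ∀ᵐ ω ∂P, X a ω ≠ X b ω) (q : ℕ) (hST : Disjoint S T)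
    (hi : i ∈ S) (hj : j ∈ T) :
    (#S * #T : ℝ) * P.real (topEvent q X S i ∩ topEvent q X T j) ≤ q ^ 2 := by
  have hdisj := Finset.disjoint_left.1 hST
  have haverage : (#(S ×ˢ T) : ℝ) * P.real (topEvent q X S i ∩ topEvent q X T j) ≤ (q * q : ℕ) := by
    have hE (w : ι × ι) (_ : w ∈ S ×ˢ T) :
        NullMeasurableSet (topEvent q X S w.1 ∩ topEvent q X T w.2) P :=
      (hX.nullMeasurableSet_topEvent q S w.1).inter (hX.nullMeasurableSet_topEvent q T w.2)
    refine card_mul_measureReal_le_of_card_filter_le hE (fun w hw => ?_) ?_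
    · obtain ⟨hi', hj'⟩ := Finset.mem_product.1 hw
      have hjS : j ∉ S := fun h => hdisj h hj
      have hjS' : w.2 ∉ S := fun h => hdisj h hj'
      exact hX.measure_topEvent_inter_eq q (ne_of_mem_of_not_mem hi hjS)
        (ne_of_mem_of_not_mem hi' hjS') (iff_of_true hi hi') (iff_of_false hjS hjS')
        (iff_of_false (hdisj hi) (hdisj hi')) (iff_of_true hj hj')
    · filter_upwards [ae_injOn_of_pairwise_ae_ne hne S, ae_injOn_of_pairwise_ae_ne hne T]
        with ω hS hT using card_filter_product_mem_topEvent_le hS hT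
  simpa only [Finset.card_product, Nat.cast_mul, sq] using haverage

lemma card_mul_measureReal_topEvent_inter_le [DecidableEq ι] (hX : Exchangeable X P)
    (hne : Pairwise fun a b => ∀ᵐ ω ∂P, X a ω ≠ X b ω) (q : ℕ) (hi : i ∈ S) (hjS : j ∈ S)
    (hjT : j ∈ T) (hij : i ≠ j) :
    ((#S - 1) * (#(T \ S) + 1) : ℝ) * P.real (topEvent q X S i ∩ topEvent q X T j) ≤ q ^ 2 := by
  have hdisj : Disjoint (S.erase j) (insert j (T \ S)) :=
    Finset.disjoint_insert_right.2 ⟨Finset.notMem_erase j S,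
      Finset.disjoint_sdiff.mono_left (Finset.erase_subset j S)⟩
  have hcardS : (#(S.erase j) : ℝ) = #S - 1 := Finset.cast_card_erase_of_mem hjS
  have hcardT : (#(insert j (T \ S)) : ℝ) = #(T \ S) + 1 := by
    rw [Finset.card_insert_of_notMem fun h => (Finset.mem_sdiff.1 h).2 hjS, Nat.cast_succ]
  have hshrink : topEvent q X S i ∩ topEvent q X T j ⊆
      topEvent q X (S.erase j) i ∩ topEvent q X (insert j (T \ S)) j :=
    inter_subset_inter (topEvent_anti (Finset.erase_subset j S) i)
      (topEvent_anti (Finset.insert_subset hjT Finset.sdiff_subset) j)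
  rw [← hcardS, ← hcardT]
  exact (mul_le_mul_of_nonneg_left (measureReal_mono hshrink) (by positivity)).trans <|
    hX.card_mul_measureReal_topEvent_inter_le_of_disjoint hne q hdisj
      (Finset.mem_erase.2 ⟨hij, hi⟩) (Finset.mem_insert_self j _)

end Exchangeable

theorem indicator_product_bound_general [DecidableEq ι] [LinearOrder α] [TopologicalSpace α]
    [OrderClosedTopology α] [SecondCountableTopology α] [OpensMeasurableSpace α]
    [IsProbabilityMeasure P] (hX : Exchangeable X P)
    (hne : Pairwise fun a b => ∀ᵐ ω ∂P, X a ω ≠ X b ω) (q : ℕ) {S T : Finset ι} {i j : ι}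
    (hi : i ∈ S ∩ T) (hj : j ∈ S ∩ T) (hij : i ≠ j) (hcard : #S = #T) :
    P.real ((topEvent q X S i ∪ topEvent q X T i) ∩ (topEvent q X S j ∪ topEvent q X T j)) ≤
      2 * (2 * (q : ℝ) ^ 2 - q) / ((#S - 1) * (#S - #(S ∩ T) + 1)) := by
  obtain ⟨hiS, hiT⟩ := Finset.mem_inter.1 hi
  obtain ⟨hjS, hjT⟩ := Finset.mem_inter.1 hj
  have hone : (1 : ℝ) < #S := mod_cast Finset.one_lt_card.2 ⟨i, hiS, j, hjS, hij⟩
  have hinter : (1 : ℝ) ≤ #(S ∩ T) := mod_cast Finset.card_pos.2 ⟨i, hi⟩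
  have hsdiff : (#(T \ S) : ℝ) = #S - #(S ∩ T) := by
    rw [eq_sub_iff_add_eq, Finset.inter_comm, hcard]
    exact_mod_cast Finset.card_sdiff_add_card_inter T S
  rw [← hsdiff]
  set D : ℝ := (#S - 1) * (#(T \ S) + 1) with hD
  have hD_pos : 0 < D := mul_pos (by linarith) (by positivity)
  have hD_le : D ≤ #S * (#S - 1) := by
    rw [hD, mul_comm]
    exact mul_le_mul_of_nonneg_right (by linarith) (by linarith)
  have hself (R : Finset ι) (hR : #R = #S) (hi : i ∈ R) (hj : j ∈ R) :
      D * P.real (topEvent q X R i ∩ topEvent q X R j) ≤ q * (q - 1) :=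
    (mul_le_mul_of_nonneg_right (hR ▸ hD_le) measureReal_nonneg).trans <|
      hX.card_mul_measureReal_topEvent_inter_self_le hne q hi hj hij
  have hcross : D * P.real (topEvent q X S i ∩ topEvent q X T j) ≤ q ^ 2 :=
    hX.card_mul_measureReal_topEvent_inter_le hne q hiS hjS hjT hij
  have hcross' : D * P.real (topEvent q X T i ∩ topEvent q X S j) ≤ q ^ 2 := by
    rw [inter_comm]
    exact hX.card_mul_measureReal_topEvent_inter_le hne q hjS hiS hiT hij.symm
  rw [le_div_iff₀' hD_pos]
  have hunion := mul_le_mul_of_nonneg_left (measureReal_union_inter_union_le (P := P)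
    (topEvent q X S i) (topEvent q X T i) (topEvent q X S j) (topEvent q X T j)) hD_pos.le
  linarith [hself S rfl hiS hjS, hself T hcard.symm hiT hjT]

end Exchangeable

/-- Lemma: second moment of the indicators.
For iid random variables with a continuous (atomless) common distribution,
`E[1_{m-1,ℓ,m} 1_{m,ℓ,m}] ≤ 2(2q² - q)/((m-1)(m-ℓ+1))`. -/
theorem indicator_product_bound
    {Ω : Type*} [MeasurableSpace Ω] (P : Measure Ω) [IsProbabilityMeasure P]
    (q ℓ m : ℕ) (hq : 1 ≤ q) (hℓ : 2 ≤ ℓ) (hm : ℓ + q ≤ m)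
    (Z : ℕ → Ω → ℝ) (hZmeas : ∀ i, Measurable (Z i))
    (hIndep : iIndepFun Z P)
    (μ : Measure ℝ) (hDist : ∀ i, Measure.map (Z i) P = μ)
    (hCont : ∀ x : ℝ, μ {x} = 0) :
    (P ({ω | inTopQ q Z (Finset.Icc 1 m) (m - 1) ω ∨
            inTopQ q Z (Finset.Icc (m - ℓ + 1) (2 * m - ℓ)) (m - 1) ω} ∩
        {ω | inTopQ q Z (Finset.Icc 1 m) m ω ∨
            inTopQ q Z (Finset.Icc (m - ℓ + 1) (2 * m - ℓ)) m ω})).toReal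
      ≤ 2 * (2 * (q : ℝ) ^ 2 - (q : ℝ)) /
          (((m : ℝ) - 1) * ((m : ℝ) - (ℓ : ℝ) + 1)) := by
  have hident (a b : ℕ) : IdentDistrib (Z a) (Z b) P P :=
    ⟨(hZmeas a).aemeasurable, (hZmeas b).aemeasurable, (hDist a).trans (hDist b).symm⟩
  have hne : Pairwise fun a b => ∀ᵐ ω ∂P, Z a ω ≠ Z b ω := fun a b hab =>
    have : NullSingletonClass (P.map (Z b)) := ⟨by rwa [hDist]⟩
    ae_ne_of_indepFun (hZmeas a).aemeasurable (hZmeas b).aemeasurable (hIndep.indepFun hab)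
  have hinter : Finset.Icc 1 m ∩ Finset.Icc (m - ℓ + 1) (2 * m - ℓ) =
      Finset.Icc (m - ℓ + 1) m := by
    ext a
    simp only [Finset.mem_inter, Finset.mem_Icc]
    omega
  have hcard : (Finset.Icc (m - ℓ + 1) m).card = ℓ := by rw [Nat.card_Icc]; omega
  have hbound := indicator_product_bound_general (exchangeable_of_iIndepFun hIndep hident) hne q
    (S := Finset.Icc 1 m) (T := Finset.Icc (m - ℓ + 1) (2 * m - ℓ)) (i := m - 1) (j := m)
    (by rw [hinter, Finset.mem_Icc]; omega) (by rw [hinter, Finset.mem_Icc]; omega) (by omega)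
    (by rw [Nat.card_Icc, Nat.card_Icc]; omega)
  rw [hinter, hcard, Nat.card_Icc, Nat.add_sub_cancel] at hbound
  exact hbound

end
end

section
/- Let q ≥ 1 be an integer and let ν < q be a real number. Let Y*_1,…,Y*_m be iid standard Pareto(1) random variables with ascending order statistics Y*_{1:m} ≤ … ≤ Y*_{m:m}. Then there exists an integer m_0 (depending on q and ν) such that the family {(Y*_{m−q+1:m}/m)^ν : m ≥ m_0} is uniformly integrable. -/
open MeasureTheory ProbabilityTheory Filter Real Set Topology
open scoped ENNReal NNReal Classical

noncomputable section

/-!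
Write `W = Y*_{m-q+1:m} / m`. If `W ≥ u`, then some `q` of the `m` variables are all at least
`u * m`, so a union bound over the `q`-subsets of the sample gives `P(W ≥ u) ≤ (C / u) ^ q`,
uniformly in `m`. If `W ≤ u`, then fewer than `q` variables exceed `u * m`, so of `q` disjoint
blocks of `⌊m / q⌋` variables one contains only values at most `u * m`; hence
`P(W ≤ u) ≤ q * exp (-c / (2 * q * u))`, which is below every power of `u`. Either way `W ^ ν` has
tails `O(s ^ (-r))` for some `r > 1`, uniformly in `m`, and this forces uniform integrability.
-/

section DescStat

variable {m j : ℕ}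

lemma descStat_eq_comp_sort_rev (x : Fin m → ℝ) (hj : j < m) :
    descStat x j = (x ∘ Tuple.sort x) (Fin.rev ⟨j, hj⟩) := by
  rw [descStat, dif_pos hj]
  congr 1
  ext
  simp only [Fin.val_rev]
  omega

lemma descStat_mem_iff (x : Fin m → ℝ) (hj : j < m) {s : Set ℝ} (hs : IsUpperSet s) :
    descStat x j ∈ s ↔ j < Finset.card {i | x i ∈ s} := by
  have hanti : Antitone fun i => (x ∘ Tuple.sort x) (Fin.rev i) :=
    fun _ _ h => Tuple.monotone_sort x (Fin.rev_le_rev.2 h)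
  have hcard : Finset.card {i | (x ∘ Tuple.sort x) (Fin.rev i) ∈ s} =
      Finset.card {i | x i ∈ s} :=
    Finset.card_equiv (Fin.revPerm.trans (Tuple.sort x)) (by simp)
  rw [descStat_eq_comp_sort_rev x hj, ← hcard]
  exact (Fin.lt_card_filter_univ_iff_apply_of_imp (j := ⟨j, hj⟩)
    (fun i => (x ∘ Tuple.sort x) (Fin.rev i) ∈ s) fun _ _ h => hs (hanti h)).symm

lemma le_descStat_iff (x : Fin m → ℝ) (hj : j < m) (t : ℝ) :
    t ≤ descStat x j ↔ j < Finset.card {i | t ≤ x i} :=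
  descStat_mem_iff x hj (isUpperSet_Ici t)

lemma lt_descStat_iff (x : Fin m → ℝ) (hj : j < m) (t : ℝ) :
    t < descStat x j ↔ j < Finset.card {i | t < x i} :=
  descStat_mem_iff x hj (isUpperSet_Ioi t)

lemma descStat_nonneg {x : Fin m → ℝ} (hx : ∀ i, 0 ≤ x i) (j : ℕ) : 0 ≤ descStat x j := by
  unfold descStat
  split_ifs
  exacts [hx _, le_rfl]

lemma measurable_descStat (m j : ℕ) : Measurable fun x : Fin m → ℝ => descStat x j := by
  by_cases hj : j < m
  · refine measurable_of_Ici fun t => ?_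
    have hcount : Measurable fun x : Fin m → ℝ => Finset.card {i | t ≤ x i} := by
      simp only [Finset.card_filter]
      exact Finset.measurable_sum _ fun i _ => Measurable.ite
        (measurableSet_le measurable_const (measurable_pi_apply i)) measurable_const
        measurable_const
    simp only [preimage, mem_Ici, le_descStat_iff _ hj]
    exact measurableSet_lt measurable_const hcount
  · simp only [descStat, dif_neg hj, measurable_const]

end DescStat

section Counting

variable {Ω ι : Type*} {mΩ : MeasurableSpace Ω} {P : Measure Ω} [Fintype ι]
  {β : Type*} [MeasurableSpace β] {Y : ι → Ω → β} {B : Set β} {p : ℝ≥0∞}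

lemma measure_le_card_mem_le (hY : iIndepFun Y P) (hB : MeasurableSet B)
    (hp : ∀ i, P (Y i ⁻¹' B) ≤ p) (k : ℕ) :
    P {ω | k ≤ Finset.card {i | Y i ω ∈ B}} ≤ (Fintype.card ι).choose k * p ^ k := by
  have hcover : {ω | k ≤ Finset.card {i | Y i ω ∈ B}} ⊆
      ⋃ s ∈ Finset.univ.powersetCard k, ⋂ i ∈ s, Y i ⁻¹' B := by
    intro ω hω
    obtain ⟨s, hs, hcard⟩ := Finset.exists_subset_card_eq hω
    simp only [mem_iUnion, mem_iInter]
    exact ⟨s, Finset.mem_powersetCard_univ.2 hcard,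
      fun i hi => (Finset.mem_filter.1 (hs hi)).2⟩
  have hinter : ∀ s ∈ Finset.univ.powersetCard k, P (⋂ i ∈ s, Y i ⁻¹' B) ≤ p ^ k := by
    intro s hs
    rw [hY.measure_inter_preimage_eq_mul s fun _ _ => hB, ← Finset.mem_powersetCard_univ.1 hs]
    exact Finset.prod_le_pow_card _ _ _ fun i _ => hp i
  calc P {ω | k ≤ Finset.card {i | Y i ω ∈ B}}
      ≤ ∑ s ∈ Finset.univ.powersetCard k, P (⋂ i ∈ s, Y i ⁻¹' B) :=
        (measure_mono hcover).trans (measure_biUnion_finset_le _ _)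
    _ ≤ ∑ _s ∈ (Finset.univ : Finset ι).powersetCard k, p ^ k := Finset.sum_le_sum hinter
    _ = (Fintype.card ι).choose k * p ^ k := by
        rw [Finset.sum_const, Finset.card_powersetCard, Finset.card_univ, nsmul_eq_mul]

lemma measure_card_notMem_lt_le {κ τ : Type*} [Fintype κ] [Fintype τ] (g : κ × τ ↪ ι)
    (hY : iIndepFun Y P) (hB : MeasurableSet B) (hp : ∀ i, P (Y i ⁻¹' B) ≤ p) :
    P {ω | Finset.card {i | Y i ω ∉ B} < Fintype.card κ} ≤
      Fintype.card κ * p ^ Fintype.card τ := by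
  have hcover : {ω | Finset.card {i | Y i ω ∉ B} < Fintype.card κ} ⊆
      ⋃ a, ⋂ b, Y (g (a, b)) ⁻¹' B := by
    intro ω hω
    by_contra hescape
    simp only [mem_iUnion, mem_iInter, not_exists, not_forall] at hescape
    choose b hb using hescape
    have hinj : Function.Injective fun a => g (a, b a) :=
      fun _ _ h => congrArg Prod.fst (g.injective h)
    refine hω.not_ge (Finset.card_univ.symm.trans_le ?_)
    exact Finset.card_le_card_of_injOn _ (fun a _ => by simpa using hb a) hinj.injOn
  have hblock : ∀ a, P (⋂ b, Y (g (a, b)) ⁻¹' B) ≤ p ^ Fintype.card τ := by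
    intro a
    have hYa : iIndepFun (fun b => Y (g (a, b))) P :=
      hY.precomp (g.injective.comp (Prod.mk_right_injective a))
    rw [hYa.meas_iInter fun b => ⟨B, hB, rfl⟩]
    exact Finset.prod_le_pow_card _ _ _ fun b _ => hp _
  calc P {ω | Finset.card {i | Y i ω ∉ B} < Fintype.card κ}
      ≤ ∑ a, P (⋂ b, Y (g (a, b)) ⁻¹' B) :=
        (measure_mono hcover).trans (measure_iUnion_fintype_le _ _)
    _ ≤ ∑ _a : κ, p ^ Fintype.card τ := Finset.sum_le_sum fun a _ => hblock a
    _ = Fintype.card κ * p ^ Fintype.card τ := by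
        rw [Finset.sum_const, Finset.card_univ, nsmul_eq_mul]

end Counting

section DescStatTail

variable {Ω : Type*} {mΩ : MeasurableSpace Ω} {P : Measure Ω} {m j : ℕ} {t u : ℝ} {p : ℝ≥0∞}
  {Y : Fin m → Ω → ℝ}

lemma measure_le_descStat_le (hY : iIndepFun Y P) (hj : j < m)
    (hp : ∀ i, P (Y i ⁻¹' Ici t) ≤ p) :
    P {ω | t ≤ descStat (fun i => Y i ω) j} ≤ (m * p) ^ (j + 1) := by
  calc P {ω | t ≤ descStat (fun i => Y i ω) j}
      ≤ m.choose (j + 1) * p ^ (j + 1) := by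
        simpa only [le_descStat_iff _ hj, Nat.lt_iff_add_one_le, mem_Ici, Fintype.card_fin]
          using measure_le_card_mem_le hY measurableSet_Ici hp (j + 1)
    _ ≤ m ^ (j + 1) * p ^ (j + 1) := by
        gcongr
        exact_mod_cast Nat.choose_le_pow m (j + 1)
    _ = (m * p) ^ (j + 1) := (mul_pow _ _ _).symm

lemma measure_descStat_le_le (hY : iIndepFun Y P) (hj : j < m)
    (hp : ∀ i, P (Y i ⁻¹' Iic t) ≤ p) :
    P {ω | descStat (fun i => Y i ω) j ≤ t} ≤ (j + 1) * p ^ (m / (j + 1)) := by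
  have hblocks : Fin (j + 1) × Fin (m / (j + 1)) ↪ Fin m :=
    finProdFinEquiv.toEmbedding.trans (Fin.castLEEmb (Nat.mul_div_le m (j + 1)))
  simpa only [← not_lt (b := descStat _ _), lt_descStat_iff _ hj, not_lt, mem_Iic, not_le,
    Fintype.card_fin, Nat.lt_add_one_iff, Nat.cast_add_one]
    using measure_card_notMem_lt_le hblocks hY measurableSet_Iic hp

lemma measure_le_descStat_div_le (hY : iIndepFun Y P) (hj : j < m) (hu : 0 < u) {C : ℝ≥0∞}
    (hupper : ∀ i t, 0 < t → P (Y i ⁻¹' Ici t) ≤ C * ENNReal.ofReal t⁻¹) :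
    P {ω | u ≤ descStat (fun i => Y i ω) j / m} ≤
      C ^ (j + 1) * ENNReal.ofReal (u ^ (-(j + 1 : ℝ))) := by
  have hm : (0 : ℝ) < m := Nat.cast_pos.2 (Nat.zero_lt_of_lt hj)
  have hscale : (m : ℝ≥0∞) * (C * ENNReal.ofReal (u * m)⁻¹) = C * ENNReal.ofReal u⁻¹ := by
    rw [mul_left_comm, ← ENNReal.ofReal_natCast m, ← ENNReal.ofReal_mul hm.le, mul_inv,
      mul_left_comm, mul_inv_cancel₀ hm.ne', mul_one]
  calc P {ω | u ≤ descStat (fun i => Y i ω) j / m}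
      = P {ω | u * m ≤ descStat (fun i => Y i ω) j} := by simp only [le_div_iff₀ hm]
    _ ≤ (m * (C * ENNReal.ofReal (u * m)⁻¹)) ^ (j + 1) :=
        measure_le_descStat_le hY hj fun i => hupper i _ (mul_pos hu hm)
    _ = C ^ (j + 1) * ENNReal.ofReal (u ^ (-(j + 1 : ℝ))) := by
        rw [hscale, mul_pow, ← ENNReal.ofReal_pow (inv_nonneg.2 hu.le), inv_pow,
          Real.rpow_neg hu.le, ← Nat.cast_add_one, Real.rpow_natCast]

lemma exp_neg_le_factorial_mul_inv_pow {x : ℝ} (hx : 0 < x) (n : ℕ) :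
    Real.exp (-x) ≤ n.factorial * x⁻¹ ^ n := by
  calc Real.exp (-x) = (Real.exp x)⁻¹ := Real.exp_neg x
    _ ≤ (x ^ n / n.factorial)⁻¹ :=
        inv_anti₀ (by positivity) (Real.pow_div_factorial_le_exp x hx.le n)
    _ = n.factorial * x⁻¹ ^ n := by rw [inv_div, inv_pow, div_eq_mul_inv]

lemma le_two_mul_mul_div {a b : ℕ} (hb : 0 < b) (hba : b ≤ a) : a ≤ 2 * b * (a / b) := by
  have hdiv : 1 ≤ a / b := Nat.div_pos hba hb
  have hlt : a < b * (a / b + 1) := Nat.lt_mul_div_succ a hb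
  nlinarith

lemma measure_descStat_div_le_le (hY : iIndepFun Y P) (hj : j < m) (hu : 0 < u) {c : ℝ}
    (hc : 0 < c)
    (hlower : ∀ i t, 0 < t → P (Y i ⁻¹' Iic t) ≤ ENNReal.ofReal (Real.exp (-(c / t)))) :
    P {ω | descStat (fun i => Y i ω) j / m ≤ u} ≤
      (j + 1) * ENNReal.ofReal (Real.exp (-(c / (2 * (j + 1) * u)))) := by
  have hm : (0 : ℝ) < m := Nat.cast_pos.2 (Nat.zero_lt_of_lt hj)
  have hblock : (m : ℝ) ≤ 2 * (j + 1) * (m / (j + 1) : ℕ) := by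
    exact_mod_cast le_two_mul_mul_div j.succ_pos hj
  have hexponent : c / (2 * (j + 1) * u) ≤ (m / (j + 1) : ℕ) * (c / (u * m)) := by
    rw [mul_div_assoc', div_le_div_iff₀ (by positivity) (by positivity)]
    calc c * (u * m) ≤ c * (u * (2 * (j + 1) * (m / (j + 1) : ℕ))) := by gcongr
      _ = (m / (j + 1) : ℕ) * c * (2 * (j + 1) * u) := by ring
  calc P {ω | descStat (fun i => Y i ω) j / m ≤ u}
      = P {ω | descStat (fun i => Y i ω) j ≤ u * m} := by simp only [div_le_iff₀ hm]
    _ ≤ (j + 1) * ENNReal.ofReal (Real.exp (-(c / (u * m)))) ^ (m / (j + 1)) :=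
        measure_descStat_le_le hY hj fun i => hlower i _ (mul_pos hu hm)
    _ = (j + 1) * ENNReal.ofReal (Real.exp (-((m / (j + 1) : ℕ) * (c / (u * m))))) := by
        rw [← ENNReal.ofReal_pow (Real.exp_nonneg _), ← Real.exp_nat_mul, mul_neg]
    _ ≤ (j + 1) * ENNReal.ofReal (Real.exp (-(c / (2 * (j + 1) * u)))) := by gcongr

lemma measure_descStat_div_le_le_pow (hY : iIndepFun Y P) (hj : j < m) (hu : 0 < u) {c : ℝ≥0}
    (hc : 0 < c)
    (hlower : ∀ i t, 0 < t → P (Y i ⁻¹' Iic t) ≤ ENNReal.ofReal (Real.exp (-(c / t)))) (n : ℕ) :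
    P {ω | descStat (fun i => Y i ω) j / m ≤ u} ≤
      ((j + 1) * (n.factorial * (2 * (j + 1) / c) ^ n) : ℝ≥0) *
        ENNReal.ofReal (u ^ (n : ℝ)) := by
  have hexp : Real.exp (-(c / (2 * (j + 1) * u))) ≤
      (n.factorial * (2 * (j + 1) / c) ^ n : ℝ≥0) * u ^ n := by
    refine (exp_neg_le_factorial_mul_inv_pow (by positivity) n).trans_eq ?_
    push_cast
    rw [inv_div, mul_div_right_comm, mul_pow, mul_assoc]
  calc P {ω | descStat (fun i => Y i ω) j / m ≤ u}
      ≤ (j + 1) * ENNReal.ofReal (Real.exp (-(c / (2 * (j + 1) * u)))) :=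
        measure_descStat_div_le_le hY hj hu hc hlower
    _ ≤ (j + 1) * ENNReal.ofReal ((n.factorial * (2 * (j + 1) / c) ^ n : ℝ≥0) * u ^ n) := by
        gcongr
    _ = ((j + 1) * (n.factorial * (2 * (j + 1) / c) ^ n) : ℝ≥0) * ENNReal.ofReal (u ^ (n : ℝ)) := by
        rw [Real.rpow_natCast, ENNReal.ofReal_mul (NNReal.coe_nonneg _),
          ENNReal.ofReal_coe_nnreal, ← mul_assoc]
        norm_cast

end DescStatTail

section UniformIntegrable

variable {α ι : Type*} {mα : MeasurableSpace α} {μ : Measure α}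

lemma setLIntegral_enorm_superlevel_le {E : Type*} [NormedAddCommGroup E] {f : α → E}
    (hf : AEStronglyMeasurable f μ) (c : ℝ) :
    ∫⁻ x in {x | c ≤ ‖f x‖}, ‖f x‖ₑ ∂μ ≤
      ENNReal.ofReal c * μ {x | c ≤ ‖f x‖} + ∫⁻ t in Ioi c, μ {x | t ≤ ‖f x‖} := by
  set ν := μ.restrict {x | c ≤ ‖f x‖}
  calc ∫⁻ x, ‖f x‖ₑ ∂ν
      = ∫⁻ t in Ioi 0, ν {x | t ≤ ‖f x‖} := by
        simp only [← ofReal_norm]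
        exact lintegral_eq_lintegral_meas_le ν (ae_of_all _ fun _ => norm_nonneg _)
          hf.restrict.norm.aemeasurable
    _ ≤ ∫⁻ t in Ioc 0 c ∪ Ioi c, ν {x | t ≤ ‖f x‖} :=
        lintegral_mono_set fun t ht => (le_or_gt t c).imp (fun h => ⟨ht, h⟩) id
    _ ≤ (∫⁻ t in Ioc 0 c, ν {x | t ≤ ‖f x‖}) + ∫⁻ t in Ioi c, ν {x | t ≤ ‖f x‖} :=
        lintegral_union_le _ _ _
    _ ≤ (∫⁻ _t in Ioc 0 c, μ {x | c ≤ ‖f x‖}) + ∫⁻ t in Ioi c, μ {x | t ≤ ‖f x‖} :=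
        add_le_add
          (setLIntegral_mono measurable_const fun _ _ =>
            (measure_mono (subset_univ _)).trans_eq (Measure.restrict_apply_univ _))
          (lintegral_mono fun _ => Measure.restrict_le_self _)
    _ = ENNReal.ofReal c * μ {x | c ≤ ‖f x‖} + ∫⁻ t in Ioi c, μ {x | t ≤ ‖f x‖} := by
        rw [setLIntegral_const, Real.volume_Ioc, sub_zero, mul_comm]

lemma setLIntegral_Ioi_rpow_neg {r c : ℝ} (hr : 1 < r) (hc : 0 < c) :
    ∫⁻ t in Ioi c, ENNReal.ofReal (t ^ (-r)) = ENNReal.ofReal (c ^ (1 - r) / (r - 1)) := by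
  rw [← ofReal_integral_eq_lintegral_ofReal
      (integrableOn_Ioi_rpow_of_lt (neg_lt_neg hr) hc), integral_Ioi_rpow_of_lt (neg_lt_neg hr) hc,
    neg_add_eq_sub, neg_div, ← div_neg, neg_sub]
  filter_upwards [ae_restrict_mem measurableSet_Ioi] with t ht
  exact Real.rpow_nonneg (hc.trans ht).le _

theorem uniformIntegrable_one_of_measure_le_norm_le {E : Type*} [NormedAddCommGroup E]
    [IsFiniteMeasure μ] {f : ι → α → E} (hf : ∀ i, AEStronglyMeasurable (f i) μ) {r : ℝ}
    (hr : 1 < r) {C : ℝ≥0}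
    (htail : ∀ i s, 0 < s → μ {x | s ≤ ‖f i x‖} ≤ C * ENNReal.ofReal (s ^ (-r))) :
    UniformIntegrable f 1 μ := by
  refine uniformIntegrable_of le_rfl ENNReal.one_ne_top hf fun ε hε => ?_
  have hlim : Tendsto (fun c : ℝ => C * (c ^ (1 - r) + c ^ (1 - r) / (r - 1))) atTop (𝓝 0) := by
    have hpow : Tendsto (fun c : ℝ => c ^ (1 - r)) atTop (𝓝 0) := by
      simpa only [neg_sub] using tendsto_rpow_neg_atTop (sub_pos.2 hr)
    simpa only [zero_div, add_zero, mul_zero] using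
      (hpow.add (hpow.div_const (r - 1))).const_mul (C : ℝ)
  obtain ⟨c, hcε, hc⟩ := ((hlim.eventually_le_const hε).and (eventually_gt_atTop 0)).exists
  refine ⟨c.toNNReal, fun i => ?_⟩
  have hset : {x | c.toNNReal ≤ ‖f i x‖₊} = {x | c ≤ ‖f i x‖} := by
    ext x
    exact Real.toNNReal_le_iff_le_coe
  have : 0 < r - 1 := sub_pos.2 hr
  calc eLpNorm ({x | c.toNNReal ≤ ‖f i x‖₊}.indicator (f i)) 1 μ
      ≤ ∫⁻ x in {x | c ≤ ‖f i x‖}, ‖f i x‖ₑ ∂μ := by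
        rw [hset, eLpNorm_one_eq_lintegral_enorm]
        simp only [enorm_indicator_eq_indicator_enorm]
        exact lintegral_indicator_le _ _
    _ ≤ ENNReal.ofReal c * μ {x | c ≤ ‖f i x‖} + ∫⁻ t in Ioi c, μ {x | t ≤ ‖f i x‖} :=
        setLIntegral_enorm_superlevel_le (hf i) c
    _ ≤ ENNReal.ofReal c * (C * ENNReal.ofReal (c ^ (-r))) +
          ∫⁻ t in Ioi c, C * ENNReal.ofReal (t ^ (-r)) :=
        add_le_add (mul_le_mul_right (htail i c hc) _)
          (setLIntegral_mono (by fun_prop) fun t ht => htail i t (hc.trans ht))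
    _ = ENNReal.ofReal (C * (c ^ (1 - r) + c ^ (1 - r) / (r - 1))) := by
        rw [lintegral_const_mul _ (by fun_prop), setLIntegral_Ioi_rpow_neg hr hc,
          mul_left_comm, ← ENNReal.ofReal_mul hc.le, ← Real.rpow_one_add' hc.le (by linarith),
          ← mul_add, ← ENNReal.ofReal_add (by positivity) (by positivity),
          ENNReal.ofReal_mul C.coe_nonneg, ENNReal.ofReal_coe_nnreal, ← sub_eq_add_neg]
    _ ≤ ENNReal.ofReal ε := ENNReal.ofReal_le_ofReal hcε

variable [IsFiniteMeasure μ] {f : ι → α → ℝ} {ν r : ℝ} {C : ℝ≥0}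

lemma uniformIntegrable_rpow_of_measure_ge_le (hf : ∀ i, AEMeasurable (f i) μ)
    (hf0 : ∀ i, 0 ≤ᵐ[μ] f i) (hν : 0 < ν) (hνr : ν < r)
    (htail : ∀ i u, 0 < u → μ {x | u ≤ f i x} ≤ C * ENNReal.ofReal (u ^ (-r))) :
    UniformIntegrable (fun i x => f i x ^ ν) 1 μ := by
  refine uniformIntegrable_one_of_measure_le_norm_le
    (fun i => ((hf i).pow_const ν).aestronglyMeasurable) ((one_lt_div hν).2 hνr) (C := C)
    fun i s hs => ?_
  have hsuper : {x | s ≤ ‖f i x ^ ν‖} ≤ᵐ[μ] {x | s ^ ν⁻¹ ≤ f i x} := by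
    filter_upwards [hf0 i] with x hx (hsx : s ≤ ‖f i x ^ ν‖)
    rw [Real.norm_of_nonneg (Real.rpow_nonneg hx ν)] at hsx
    exact (Real.rpow_inv_le_iff_of_pos hs.le hx hν).2 hsx
  calc μ {x | s ≤ ‖f i x ^ ν‖} ≤ C * ENNReal.ofReal ((s ^ ν⁻¹) ^ (-r)) :=
        (measure_mono_ae hsuper).trans (htail i _ (Real.rpow_pos_of_pos hs _))
    _ = C * ENNReal.ofReal (s ^ (-(r / ν))) := by
        rw [← Real.rpow_mul hs.le, mul_neg, inv_mul_eq_div]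

lemma uniformIntegrable_rpow_of_measure_le_le (hf : ∀ i, AEMeasurable (f i) μ)
    (hf0 : ∀ i, 0 ≤ᵐ[μ] f i) (hν : ν < 0) (hνr : -ν < r)
    (htail : ∀ i u, 0 < u → μ {x | f i x ≤ u} ≤ C * ENNReal.ofReal (u ^ r)) :
    UniformIntegrable (fun i x => f i x ^ ν) 1 μ := by
  have hinv : UniformIntegrable (fun i x => (f i x)⁻¹ ^ (-ν)) 1 μ := by
    refine uniformIntegrable_rpow_of_measure_ge_le (fun i => (hf i).inv)
      (fun i => (hf0 i).mono fun x hx => inv_nonneg.2 hx) (neg_pos.2 hν) hνr (C := C)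
      fun i u hu => ?_
    calc μ {x | u ≤ (f i x)⁻¹} ≤ μ {x | f i x ≤ u⁻¹} :=
          measure_mono fun x hx => le_inv_of_le_inv₀ hu hx
      _ ≤ C * ENNReal.ofReal (u⁻¹ ^ r) := htail i _ (inv_pos.2 hu)
      _ = C * ENNReal.ofReal (u ^ (-r)) := by rw [Real.inv_rpow hu.le, Real.rpow_neg hu.le]
  refine hinv.ae_eq fun i => ?_
  filter_upwards [hf0 i] with x hx
  rw [Real.inv_rpow hx, Real.rpow_neg hx, inv_inv]

end UniformIntegrable

section Pareto

variable {t r x : ℝ}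

lemma paretoMeasure_Ici (ht : 0 < t) (hr : 0 < r) (hx : t ≤ x) :
    paretoMeasure t r (Ici x) = ENNReal.ofReal ((t / x) ^ r) := by
  have hx0 : 0 < x := ht.trans_le hx
  have hexp : -(r + 1) < -1 := by linarith
  rw [paretoMeasure, withDensity_apply _ measurableSet_Ici,
    setLIntegral_congr_fun measurableSet_Ici fun y hy => paretoPDF_of_le (hx.trans hy),
    setLIntegral_congr Ioi_ae_eq_Ici.symm, ← ofReal_integral_eq_lintegral_ofReal
      ((integrableOn_Ioi_rpow_of_lt hexp hx0).const_mul _),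
    integral_const_mul, integral_Ioi_rpow_of_lt hexp hx0, Real.div_rpow ht.le hx0.le]
  · rw [show -(r + 1) + 1 = -r by ring, Real.rpow_neg hx0.le]
    field_simp
  · filter_upwards [ae_restrict_mem measurableSet_Ioi] with y hy
    have : 0 < y := hx0.trans hy
    simp only [Pi.zero_apply]
    positivity

lemma paretoMeasure_Iic (ht : 0 < t) (hr : 0 < r) (hx : t ≤ x) :
    paretoMeasure t r (Iic x) = ENNReal.ofReal (1 - (t / x) ^ r) := by
  have := isProbabilityMeasure_paretoMeasure ht hr
  have hae : Ioi x =ᵐ[paretoMeasure t r] Ici x :=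
    (withDensity_absolutelyContinuous _ _).ae_eq Ioi_ae_eq_Ici
  rw [← compl_Ioi, prob_compl_eq_one_sub measurableSet_Ioi, measure_congr hae,
    paretoMeasure_Ici ht hr hx, ENNReal.ofReal_sub _ (by have := ht.trans_le hx; positivity),
    ENNReal.ofReal_one]

lemma pareto1_Ici_le (hx : 0 < x) : pareto1 (Ici x) ≤ ENNReal.ofReal x⁻¹ := by
  rcases le_total x 1 with hx1 | hx1
  · exact prob_le_one.trans (ENNReal.one_le_ofReal.2 ((one_le_inv₀ hx).2 hx1))
  · rw [pareto1, paretoMeasure_Ici one_pos one_pos hx1, Real.rpow_one, one_div]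

lemma pareto1_Iic_le (x : ℝ) : pareto1 (Iic x) ≤ ENNReal.ofReal (Real.exp (-x⁻¹)) := by
  have hcdf : pareto1 (Iic (max 1 x)) = ENNReal.ofReal (1 - (max 1 x)⁻¹) := by
    rw [pareto1, paretoMeasure_Iic one_pos one_pos (le_max_left 1 x), Real.rpow_one, one_div]
  rcases le_total x 1 with hx1 | hx1
  · have hzero : pareto1 (Iic 1) = 0 := by
      simpa only [max_eq_left hx1, inv_one, sub_self, ENNReal.ofReal_zero] using hcdf
    exact (measure_mono (Iic_subset_Iic.2 hx1)).trans (hzero.trans_le zero_le)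
  · rw [max_eq_right hx1] at hcdf
    exact hcdf.trans_le (ENNReal.ofReal_le_ofReal (Real.one_sub_le_exp_neg _))

end Pareto

section OrderStatistic

variable {Ω : Type*} [MeasurableSpace Ω] {P : Measure Ω}

lemma ae_nonneg_of_measure_Iic_le_exp {X : Ω → ℝ} {c : ℝ} (hc : 0 < c)
    (hlower : ∀ t, 0 < t → P (X ⁻¹' Iic t) ≤ ENNReal.ofReal (Real.exp (-(c / t)))) :
    0 ≤ᵐ[P] X := by
  have hlim : Tendsto (fun t => ENNReal.ofReal (Real.exp (-(c / t)))) (𝓝[>] 0) (𝓝 0) := by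
    rw [← ENNReal.ofReal_zero]
    simp only [div_eq_mul_inv]
    exact ENNReal.tendsto_ofReal
      (Real.tendsto_exp_neg_atTop_nhds_zero.comp (tendsto_inv_nhdsGT_zero.const_mul_atTop hc))
  have hnull : P (X ⁻¹' Iic 0) = 0 := by
    refine nonpos_iff_eq_zero.1 (ge_of_tendsto hlim ?_)
    filter_upwards [self_mem_nhdsWithin] with t ht
    exact (measure_mono (preimage_mono (Iic_subset_Iic.2 (le_of_lt ht)))).trans (hlower t ht)
  filter_upwards [measure_eq_zero_iff_ae_notMem.1 hnull] with ω hω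
  exact (not_le.1 hω).le

theorem pareto_order_statistic_uniformly_integrable_general {j : ℕ} {ν : ℝ} (hν : ν < j + 1)
    {Y : ℕ → Ω → ℝ} (hYmeas : ∀ i, AEMeasurable (Y i) P) (hIndep : iIndepFun Y P)
    {C c : ℝ≥0} (hc : 0 < c)
    (hupper : ∀ i t, 0 < t → P (Y i ⁻¹' Ici t) ≤ C * ENNReal.ofReal t⁻¹)
    (hlower : ∀ i t, 0 < t → P (Y i ⁻¹' Iic t) ≤ ENNReal.ofReal (Real.exp (-(c / t)))) :
    UniformIntegrable
      (fun (m : {i : ℕ // j + 1 ≤ i}) ω =>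
        (descStat (fun i : Fin (m : ℕ) => Y i ω) j / ((m : ℕ) : ℝ)) ^ ν)
      1 P := by
  have := hIndep.isProbabilityMeasure
  have hfin : ∀ m : ℕ, iIndepFun (fun i : Fin m => Y i) P := fun m =>
    hIndep.precomp Fin.val_injective
  have hmeas : ∀ m : {i : ℕ // j + 1 ≤ i},
      AEMeasurable (fun ω => descStat (fun i : Fin (m : ℕ) => Y i ω) j / ((m : ℕ) : ℝ)) P :=
    fun m => ((measurable_descStat m j).comp_aemeasurable
      (aemeasurable_pi_lambda _ fun i => hYmeas i)).div_const _
  have hnonneg : ∀ m : {i : ℕ // j + 1 ≤ i},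
      0 ≤ᵐ[P] fun ω => descStat (fun i : Fin (m : ℕ) => Y i ω) j / ((m : ℕ) : ℝ) := fun m => by
    filter_upwards [ae_all_iff.2 fun i => ae_nonneg_of_measure_Iic_le_exp hc (hlower i)]
      with ω hω
    exact div_nonneg (descStat_nonneg (fun i => hω i) j) m.1.cast_nonneg
  rcases lt_trichotomy ν 0 with hneg | rfl | hpos
  · obtain ⟨n, hn⟩ := exists_nat_gt (-ν)
    exact uniformIntegrable_rpow_of_measure_le_le hmeas hnonneg hneg hn fun m u hu =>
      measure_descStat_div_le_le_pow (hfin m) m.2 hu hc (fun i => hlower i) n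
  · simpa only [Real.rpow_zero] using
      uniformIntegrable_const le_rfl ENNReal.one_ne_top (memLp_const (1 : ℝ))
  · refine uniformIntegrable_rpow_of_measure_ge_le hmeas hnonneg hpos hν (C := C ^ (j + 1))
      fun m u hu => ?_
    rw [ENNReal.coe_pow]
    exact measure_le_descStat_div_le (hfin m) m.2 hu fun i => hupper i

end OrderStatistic

/-- Lemma: uniform integrability of powers of Pareto order statistics.
For `q ≥ 1` and `ν < q`, the family `{(Y*_{m-q+1:m}/m)^ν : m ≥ m₀}` is uniformly
integrable for some `m₀` (depending on `q` and `ν`); here `Y*_{m-q+1:m}` is the `q`-th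
largest of `m` iid standard Pareto(1) random variables. -/
theorem pareto_order_statistic_uniformly_integrable
    {Ω : Type*} [MeasurableSpace Ω] (P : Measure Ω) [IsProbabilityMeasure P]
    (q : ℕ) (hq : 1 ≤ q) (ν : ℝ) (hν : ν < (q : ℝ))
    (Y : ℕ → Ω → ℝ) (hYmeas : ∀ i, Measurable (Y i))
    (hIndep : iIndepFun Y P)
    (hDist : ∀ i, Measure.map (Y i) P = pareto1) :
    ∃ m₀ : ℕ, UniformIntegrable
      (fun (m : {i : ℕ // m₀ ≤ i}) ω =>
        (descStat (fun i : Fin (m : ℕ) => Y i ω) (q - 1) / ((m : ℕ) : ℝ)) ^ ν)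
      1 P := by
  obtain ⟨j, rfl⟩ := Nat.exists_eq_add_of_le' hq
  refine ⟨j + 1, pareto_order_statistic_uniformly_integrable_general (C := 1) (c := 1)
    (by exact_mod_cast hν) (fun i => (hYmeas i).aemeasurable) hIndep one_pos
    (fun i t ht => ?_) fun i t _ => ?_⟩
  · rw [← Measure.map_apply (hYmeas i) measurableSet_Ici, hDist, ENNReal.coe_one, one_mul]
    exact pareto1_Ici_le ht
  · rw [← Measure.map_apply (hYmeas i) measurableSet_Iic, hDist, NNReal.coe_one, one_div]
    exact pareto1_Iic_le t

end
end
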